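/- (Proposition 3: MI via message passing.) For every vertex i ∈ V and every t ∈ ℝ, the indicator 1[t ∈ D_i] times the belief b_i(t) equals the partial Lebesgue integral of the indicator of Δ over all coordinates except i, with the i-th coordinate fixed to t; that is, 1[t ∈ D_i]·b_i(t) = ∫_{ℝ^{V∖{i}}} 1[x ∈ Δ] dx_{V∖{i}} where x_i = t. Consequently, the Lebesgue volume of Δ (the model integration MI(Δ)) equals ∫_ℝ 1[t ∈ D_i]·b_i(t) dt for every vertex i. -/

import Mathlib

open MeasureTheory
open scoped ENNReal

noncomputable section

/-- The model region `Δ ⊆ ℝ^V` : the set of points `x` with `x_i ∈ D_i` for every vertex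
`i` and `(x_i, x_j) ∈ D_{ij}` for every edge `{i,j}`. -/
def mpModel {V : Type*} (G : SimpleGraph V) (D : V → Set ℝ) (Dij : V → V → Set (ℝ × ℝ)) :
    Set (V → ℝ) :=
  {x | (∀ i, x i ∈ D i) ∧ ∀ i j, G.Adj i j → (x i, x j) ∈ Dij i j}

/-!
The indicator of `Δ` is a product of vertex and edge factors. For a connected vertex set `S` of the
tree, integrating this product over the coordinates outside `S` leaves the factors inside `S` times
the messages entering `S`. This is clear for `S = V`, and it passes from `S ∪ {v}` to `S` when `v`
is adjacent to `S`: as there are no cycles, `v` has a single neighbor `p` in `S`, so integrating out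
`x_v` produces exactly the message `m_{v→p}`. The case `S = {i}` is the belief of `i`.
-/

theorem sdiff_eq_erase_of_inter_eq_singleton {α : Type*} [DecidableEq α] {s t : Finset α} {a : α}
    (h : s ∩ t = {a}) : s \ t = s.erase a := by
  rw [← Finset.sdiff_inter_self_left, h, Finset.sdiff_singleton_eq_erase]

section Graph

variable {V : Type*} {G : SimpleGraph V}

theorem connected_induce_coe_singleton (i : V) :
    (G.induce (({i} : Finset V) : Set V)).Connected := by
  rw [Finset.coe_singleton, SimpleGraph.induce_singleton_eq_top]
  exact SimpleGraph.connected_top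

theorem connected_induce_insert {s : Set V} (hs : (G.induce s).Connected) {v p : V} (hp : p ∈ s)
    (hvp : G.Adj v p) : (G.induce (insert v s)).Connected :=
  SimpleGraph.connected_induce_union (s := {v}) .of_subsingleton hs.preconnected
    (Set.mem_singleton v) hp hvp

theorem eq_of_adj_of_induce_preconnected (hG : G.IsAcyclic) {s : Set V}
    (hs : (G.induce s).Preconnected) {v p q : V} (hv : v ∉ s) (hp : p ∈ s) (hq : q ∈ s)
    (hvp : G.Adj v p) (hvq : G.Adj v q) : p = q := by
  classical
  obtain ⟨walk⟩ := hs ⟨p, hp⟩ ⟨q, hq⟩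
  let path : G.Path p q := walk.toPath.mapEmbedding (SimpleGraph.Embedding.induce s)
  have hv_path : v ∉ (path : G.Walk p q).support := by
    intro h
    obtain ⟨u, -, rfl⟩ := List.mem_map.1 (SimpleGraph.Walk.support_map _ _ ▸ h)
    exact hv u.2
  have hpath : (SimpleGraph.Walk.cons hvp (path : G.Walk p q)).IsPath := path.2.cons hv_path
  simpa using (hG.eq_snd_of_adj_start hpath hvq (by simp)).symm

theorem neighborFinset_inter_eq_singleton [DecidableEq V] (hG : G.IsAcyclic) {S : Finset V}
    (hS : (G.induce (S : Set V)).Preconnected) {v p : V} [Fintype (G.neighborSet v)] (hv : v ∉ S)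
    (hp : p ∈ S) (hvp : G.Adj v p) : G.neighborFinset v ∩ S = {p} := by
  ext q
  simp only [Finset.mem_inter, SimpleGraph.mem_neighborFinset, Finset.mem_singleton]
  constructor
  · rintro ⟨hvq, hq⟩
    exact eq_of_adj_of_induce_preconnected hG hS (by simpa using hv) hq hp hvq hvp
  · rintro rfl
    exact ⟨hvp, hp⟩

theorem exists_adj_notMem (hG : G.Preconnected) {s : Set V} {a b : V} (ha : a ∈ s) (hb : b ∉ s) :
    ∃ v ∉ s, ∃ p ∈ s, G.Adj v p := by
  obtain ⟨walk⟩ := hG a b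
  obtain ⟨d, -, hfst, hsnd⟩ := walk.exists_boundary_dart s ha hb
  exact ⟨d.snd, hsnd, d.fst, hfst, d.adj.symm⟩

theorem connected_induce_induction [Finite V] [DecidableEq V] {P : Finset V → Prop}
    (step : ∀ S : Finset V, (G.induce (S : Set V)).Connected →
      (∀ v ∉ S, ∀ p ∈ S, G.Adj v p → P (insert v S)) → P S)
    (S : Finset V) (hS : (G.induce (S : Set V)).Connected) : P S := by
  induction S using WellFoundedGT.induction with
  | ind S ih =>
    refine step S hS fun v hv p hp hvp => ih _ (Finset.ssubset_insert hv) ?_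
    rw [Finset.coe_insert]
    exact connected_induce_insert hS hp hvp

theorem filter_edgeSet_sym2_insert [DecidableEq V] [DecidableRel G.Adj] (S : Finset V) (v : V)
    [Fintype (G.neighborSet v)] :
    {e ∈ (insert v S).sym2 | e ∈ G.edgeSet} =
      (G.neighborFinset v ∩ S).image (fun q => s(v, q)) ∪ {e ∈ S.sym2 | e ∈ G.edgeSet} := by
  ext e
  simp only [Finset.sym2_insert, Finset.mem_filter, Finset.mem_union, Finset.mem_image,
    Finset.mem_insert, Finset.mem_inter, SimpleGraph.mem_neighborFinset]
  constructor
  · rintro ⟨⟨q, rfl | hq, rfl⟩ | he, hadj⟩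
    · exact absurd hadj G.irrefl
    · exact .inl ⟨q, ⟨hadj, hq⟩, rfl⟩
    · exact .inr ⟨he, hadj⟩
  · rintro (⟨q, ⟨hadj, hq⟩, rfl⟩ | ⟨he, hadj⟩)
    · exact ⟨.inl ⟨q, .inr hq, rfl⟩, hadj⟩
    · exact ⟨.inr he, hadj⟩

end Graph

section Marginal

variable {ι : Type*} [Fintype ι] [DecidableEq ι] {X : ι → Type*} [∀ i, MeasurableSpace (X i)]
  (μ : ∀ i, Measure (X i)) [∀ i, SigmaFinite (μ i)]

theorem lmarginal_compl_singleton (f : (∀ i, X i) → ℝ≥0∞) (i : ι) (x : ∀ i, X i) :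
    (∫⋯∫⁻_{i}ᶜ, f ∂μ) x =
      ∫⁻ y : ∀ j : {j // j ≠ i}, X j, f ((Equiv.piSplitAt i X).symm (x i, y))
        ∂Measure.pi fun j : {j // j ≠ i} => μ j := by
  let e : {j // j ≠ i} ≃ ({i}ᶜ : Finset ι) := Equiv.subtypeEquivRight (by simp)
  rw [lmarginal, ← (measurePreserving_piCongrLeft (fun j : ({i}ᶜ : Finset ι) => μ j)
    e).lintegral_comp_emb (MeasurableEquiv.measurableEmbedding _)]
  refine lintegral_congr fun y => congrArg f (funext fun j => ?_)
  by_cases h : j = i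
  · subst h
    simp [Function.updateFinset, Equiv.piSplitAt]
  · have hj : j ∈ ({i}ᶜ : Finset ι) := by simpa using h
    simp only [Function.updateFinset, hj, dite_true]
    refine .trans ?_ (dif_neg h).symm
    exact Equiv.piCongrLeft_apply_apply (fun j : ({i}ᶜ : Finset ι) => X j) e y ⟨j, h⟩

theorem lintegral_pi_eq_lintegral_lmarginal_compl_singleton {f : (∀ i, X i) → ℝ≥0∞}
    (hf : Measurable f) (i : ι) (x : ∀ i, X i) :
    ∫⁻ z, f z ∂Measure.pi μ = ∫⁻ t, (∫⋯∫⁻_{i}ᶜ, f ∂μ) (Function.update x i t) ∂μ i := by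
  rw [lintegral_eq_lmarginal_univ x, lmarginal_erase f hf (Finset.mem_univ i),
    ← Finset.compl_singleton]

end Marginal

section Messages

variable {V : Type*} [Fintype V] [DecidableEq V] {X : V → Type*} (G : SimpleGraph V)
  [DecidableRel G.Adj] (m : V → ∀ j, X j → ℝ≥0∞)

/-- The product of the messages entering `S` from outside, where `m i j` is the message from `i`
to `j`. -/
def incomingMessages (S : Finset V) (x : ∀ i, X i) : ℝ≥0∞ :=
  ∏ w ∈ S, ∏ c ∈ G.neighborFinset w \ S, m c w (x w)

theorem incomingMessages_univ (x : ∀ i, X i) : incomingMessages G m Finset.univ x = 1 := by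
  simp [incomingMessages, Finset.sdiff_eq_empty_iff_subset.2 (Finset.subset_univ _)]

theorem incomingMessages_singleton (i : V) (x : ∀ i, X i) :
    incomingMessages G m {i} x = ∏ c ∈ G.neighborFinset i, m c i (x i) := by
  rw [incomingMessages, Finset.prod_singleton,
    Finset.sdiff_singleton_eq_erase, Finset.erase_eq_of_notMem (G.notMem_neighborFinset_self i)]

theorem incomingMessages_insert {S : Finset V} {v : V} (hv : v ∉ S) (x : ∀ i, X i) :
    incomingMessages G m (insert v S) x =
      (∏ c ∈ G.neighborFinset v \ S, m c v (x v)) *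
        ∏ w ∈ S, ∏ c ∈ G.neighborFinset w \ insert v S, m c w (x w) := by
  rw [incomingMessages, Finset.prod_insert hv, Finset.sdiff_insert_of_notMem (by simp)]

theorem incomingMessages_eq_prod_inter_mul {S : Finset V} {v : V} (hv : v ∉ S) (x : ∀ i, X i) :
    incomingMessages G m S x =
      (∏ q ∈ G.neighborFinset v ∩ S, m v q (x q)) *
        ∏ w ∈ S, ∏ c ∈ G.neighborFinset w \ insert v S, m c w (x w) := by
  have hsplit : ∀ w ∈ S, ∏ c ∈ G.neighborFinset w \ S, m c w (x w) =
      (if w ∈ G.neighborFinset v then m v w (x w) else 1) *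
        ∏ c ∈ G.neighborFinset w \ insert v S, m c w (x w) := by
    intro w _
    rw [Finset.sdiff_insert]
    split_ifs with hvw
    · rw [Finset.mul_prod_erase _ fun c => m c w (x w)]
      simpa [hv, G.adj_comm w v] using hvw
    · rw [one_mul, Finset.erase_eq_of_notMem]
      simpa [G.adj_comm w v, hv] using hvw
  rw [incomingMessages, Finset.prod_congr rfl hsplit, Finset.prod_mul_distrib, Finset.prod_ite_mem,
    Finset.inter_comm]

end Messages

/-- The factors of a pairwise model: a weight for each coordinate and a weight for each pair of
coordinates. The pair weights are indexed by ordered pairs, the two orders being compatible, and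
the graph decides which of them are used. -/
structure PairwiseFactors {V : Type*} (X : V → Type*) [∀ i, MeasurableSpace (X i)] where
  vertex : ∀ i, X i → ℝ≥0∞
  edge : ∀ i j, X i × X j → ℝ≥0∞
  measurable_vertex : ∀ i, Measurable (vertex i)
  measurable_edge : ∀ i j, Measurable (edge i j)
  edge_swap : ∀ i j p, edge j i p.swap = edge i j p

namespace PairwiseFactors

variable {V : Type*} {X : V → Type*} [∀ i, MeasurableSpace (X i)] (F : PairwiseFactors X)

/-- The weight of the configuration `x` on an unordered pair of vertices. -/
def sym2Edge (x : ∀ i, X i) : Sym2 V → ℝ≥0∞ :=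
  Sym2.lift ⟨fun i j => F.edge i j (x i, x j), fun i j => (F.edge_swap i j (x i, x j)).symm⟩

@[simp]
theorem sym2Edge_mk (x : ∀ i, X i) (i j : V) : F.sym2Edge x s(i, j) = F.edge i j (x i, x j) :=
  rfl

theorem measurable_sym2Edge (e : Sym2 V) : Measurable fun x => F.sym2Edge x e := by
  induction e with
  | _ i j =>
    exact (F.measurable_edge i j).comp ((measurable_pi_apply i).prodMk (measurable_pi_apply j))

variable (G : SimpleGraph V) [DecidableRel G.Adj]

/-- The product of the factors of the vertices in `S` and of the edges of `G` inside `S`. -/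
def weight (S : Finset V) (x : ∀ i, X i) : ℝ≥0∞ :=
  (∏ i ∈ S, F.vertex i (x i)) * ∏ e ∈ S.sym2 with e ∈ G.edgeSet, F.sym2Edge x e

theorem measurable_weight (S : Finset V) : Measurable (F.weight G S) :=
  (Finset.measurable_fun_prod _ fun i _ => (F.measurable_vertex i).comp (measurable_pi_apply i)).mul
    (Finset.measurable_fun_prod _ fun e _ => F.measurable_sym2Edge e)

theorem weight_singleton (i : V) (x : ∀ i, X i) : F.weight G {i} x = F.vertex i (x i) := by
  simp [weight, Finset.filter_singleton]

theorem weight_congr {S : Finset V} {x y : ∀ i, X i} (h : ∀ i ∈ S, x i = y i) :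
    F.weight G S x = F.weight G S y := by
  have hedge : ∀ e ∈ S.sym2, F.sym2Edge x e = F.sym2Edge y e := by
    intro e he
    induction e with
    | _ i j =>
      rw [Finset.mk_mem_sym2_iff] at he
      rw [sym2Edge_mk, sym2Edge_mk, h i he.1, h j he.2]
  rw [weight, weight, Finset.prod_congr rfl fun i hi => by rw [h i hi],
    Finset.prod_congr rfl fun e he => hedge e (Finset.mem_of_mem_filter e he)]

variable [Fintype V] [DecidableEq V]

theorem weight_insert {S : Finset V} {v : V} (hv : v ∉ S) (x : ∀ i, X i) :
    F.weight G (insert v S) x =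
      F.vertex v (x v) * (∏ q ∈ G.neighborFinset v ∩ S, F.edge v q (x v, x q)) *
        F.weight G S x := by
  have hdisj : Disjoint ((G.neighborFinset v ∩ S).image fun q => s(v, q))
      {e ∈ S.sym2 | e ∈ G.edgeSet} := by
    simp only [Finset.disjoint_left, Finset.mem_image, Finset.mem_filter]
    rintro _ ⟨q, -, rfl⟩ ⟨h, -⟩
    exact hv (Finset.mk_mem_sym2_iff.1 h).1
  rw [weight, weight, Finset.prod_insert hv, filter_edgeSet_sym2_insert, Finset.prod_union hdisj,
    Finset.prod_image (by simp)]
  simp only [sym2Edge_mk]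
  ring

/-- The belief of a vertex set `S`: the factors inside `S` times the messages entering `S`. For
`S = {i}` it is the factor of `i` times the belief `b_i` of the paper. -/
def belief (m : V → ∀ j, X j → ℝ≥0∞) (S : Finset V) (x : ∀ i, X i) : ℝ≥0∞ :=
  F.weight G S x * incomingMessages G m S x

theorem belief_univ (m : V → ∀ j, X j → ℝ≥0∞) :
    F.belief G m Finset.univ = F.weight G Finset.univ := by
  ext x
  rw [belief, incomingMessages_univ, mul_one]

theorem belief_singleton (m : V → ∀ j, X j → ℝ≥0∞) (i : V) (x : ∀ i, X i) :
    F.belief G m {i} x = F.vertex i (x i) * ∏ c ∈ G.neighborFinset i, m c i (x i) := by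
  rw [belief, weight_singleton, incomingMessages_singleton]

theorem belief_insert_update (m : V → ∀ j, X j → ℝ≥0∞) {S : Finset V} {v p : V} (hv : v ∉ S)
    (hp : G.neighborFinset v ∩ S = {p}) (x : ∀ i, X i) (y : X v) :
    F.belief G m (insert v S) (Function.update x v y) =
      F.weight G S x * (∏ w ∈ S, ∏ c ∈ G.neighborFinset w \ insert v S, m c w (x w)) *
        (F.edge v p (y, x p) * F.vertex v y * ∏ c ∈ (G.neighborFinset v).erase p, m c v y) := by
  have hupdate : ∀ w ∈ S, Function.update x v y w = x w := fun w hw =>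
    Function.update_of_ne (ne_of_mem_of_not_mem hw hv) y x
  have hpS : p ∈ S := Finset.mem_of_mem_inter_right (hp ▸ Finset.mem_singleton_self p)
  have houter : ∏ w ∈ S, ∏ c ∈ G.neighborFinset w \ insert v S,
      m c w (Function.update x v y w) =
        ∏ w ∈ S, ∏ c ∈ G.neighborFinset w \ insert v S, m c w (x w) :=
    Finset.prod_congr rfl fun w hw => by rw [hupdate w hw]
  rw [belief, weight_insert _ _ hv, incomingMessages_insert _ _ hv, houter, hp,
    sdiff_eq_erase_of_inter_eq_singleton hp, Finset.prod_singleton, F.weight_congr G hupdate,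
    Function.update_self, hupdate p hpS]
  ring

/-- The sum-product recursion along the edges of `G`, where `m i j` is the message from `i`
to `j`. -/
def IsMessageFamily (μ : ∀ i, Measure (X i)) (m : V → ∀ j, X j → ℝ≥0∞) : Prop :=
  ∀ i j, G.Adj i j → ∀ t, m i j t =
    ∫⁻ x, F.edge i j (x, t) * F.vertex i x * ∏ c ∈ (G.neighborFinset i).erase j, m c i x ∂μ i

variable {F G} {μ : ∀ i, Measure (X i)} [∀ i, SigmaFinite (μ i)] {m : V → ∀ j, X j → ℝ≥0∞}

theorem measurable_message_integrand {i j : V}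
    (hchild : ∀ c ∈ (G.neighborFinset i).erase j, Measurable (m c i)) :
    Measurable fun z : X i × X j =>
      F.edge i j z * F.vertex i z.1 * ∏ c ∈ (G.neighborFinset i).erase j, m c i z.1 :=
  ((F.measurable_edge i j).mul ((F.measurable_vertex i).comp measurable_fst)).mul
    (Finset.measurable_fun_prod _ fun c hc => (hchild c hc).comp measurable_fst)

theorem IsMessageFamily.measurable (hm : F.IsMessageFamily G μ m) (hG : G.IsAcyclic) {i j : V}
    (hij : G.Adj i j) : Measurable (m i j) := by
  suffices hS : ∀ S : Finset V, (G.induce (S : Set V)).Connected →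
      ∀ i ∉ S, ∀ j ∈ S, G.Adj i j → Measurable (m i j) from
    hS {j} (connected_induce_coe_singleton j) i (by simpa using hij.ne) j (by simp) hij
  refine connected_induce_induction fun S hS ih i hi j hj hij => ?_
  have hchild : ∀ c ∈ (G.neighborFinset i).erase j, Measurable (m c i) := by
    intro c hc
    rw [← sdiff_eq_erase_of_inter_eq_singleton
      (neighborFinset_inter_eq_singleton hG hS.preconnected hi hj hij), Finset.mem_sdiff,
      SimpleGraph.mem_neighborFinset] at hc
    exact ih i hi j hj hij c (by simp [hc.1.ne', hc.2]) i (by simp) hc.1.symm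
  rw [funext (hm i j hij)]
  exact (measurable_message_integrand hchild).lintegral_prod_left'

theorem IsMessageFamily.lintegral_belief_insert (hm : F.IsMessageFamily G μ m)
    (hG : G.IsAcyclic) {S : Finset V} {v p : V} (hv : v ∉ S)
    (hp : G.neighborFinset v ∩ S = {p}) (x : ∀ i, X i) :
    ∫⁻ y, F.belief G m (insert v S) (Function.update x v y) ∂μ v = F.belief G m S x := by
  have hvp : G.Adj v p := (G.mem_neighborFinset v p).1 <|
    Finset.mem_of_mem_inter_left (hp ▸ Finset.mem_singleton_self p)
  have hchild : ∀ c ∈ (G.neighborFinset v).erase p, Measurable (m c v) := fun c hc =>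
    hm.measurable hG ((G.mem_neighborFinset v c).1 (Finset.mem_of_mem_erase hc)).symm
  have hmeas : Measurable fun y => F.edge v p (y, x p) * F.vertex v y *
      ∏ c ∈ (G.neighborFinset v).erase p, m c v y :=
    (measurable_message_integrand hchild).comp measurable_prodMk_right
  simp only [belief_insert_update F G m hv hp]
  rw [lintegral_const_mul _ hmeas, ← hm v p hvp, belief,
    incomingMessages_eq_prod_inter_mul _ _ hv, hp, Finset.prod_singleton]
  ring

theorem IsMessageFamily.lmarginal_weight_eq_belief (hm : F.IsMessageFamily G μ m) (hG : G.IsTree) :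
    ∀ S : Finset V, (G.induce (S : Set V)).Connected →
      ∫⋯∫⁻_Sᶜ, F.weight G Finset.univ ∂μ = F.belief G m S := by
  refine connected_induce_induction fun S hS ih => ?_
  obtain rfl | hne := eq_or_ne S Finset.univ
  · rw [Finset.compl_univ, lmarginal_empty, belief_univ]
  obtain ⟨b, hb⟩ : ∃ b, b ∉ S := by simpa [Finset.eq_univ_iff_forall] using hne
  obtain ⟨⟨a, ha⟩⟩ := hS.nonempty
  obtain ⟨v, hv, p, hp, hvp⟩ := exists_adj_notMem hG.connected.preconnected ha hb
  have hinter := neighborFinset_inter_eq_singleton hG.isAcyclic hS.preconnected hv hp hvp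
  ext x
  rw [lmarginal_erase _ (F.measurable_weight G Finset.univ) (Finset.mem_compl.2 hv),
    ← Finset.compl_insert, ih v hv p hp hvp, hm.lintegral_belief_insert hG.isAcyclic hv hinter]

theorem IsMessageFamily.lmarginal_compl_singleton_weight (hm : F.IsMessageFamily G μ m)
    (hG : G.IsTree) (i : V) (x : ∀ i, X i) :
    (∫⋯∫⁻_{i}ᶜ, F.weight G Finset.univ ∂μ) x =
      F.vertex i (x i) * ∏ c ∈ G.neighborFinset i, m c i (x i) := by
  rw [hm.lmarginal_weight_eq_belief hG {i} (connected_induce_coe_singleton i),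
    belief_singleton]

end PairwiseFactors

theorem mi_message_passing_general {V : Type*} [Fintype V] [DecidableEq V] {G : SimpleGraph V}
    [DecidableRel G.Adj] (hG : G.IsTree) {X : V → Type*} [∀ i, MeasurableSpace (X i)]
    [∀ i, Nonempty (X i)] {μ : ∀ i, Measure (X i)} [∀ i, SigmaFinite (μ i)]
    {F : PairwiseFactors X} {m : V → ∀ j, X j → ℝ≥0∞} (hm : F.IsMessageFamily G μ m) :
    (∀ i t, F.vertex i t * ∏ c ∈ G.neighborFinset i, m c i t =
      ∫⁻ y : ∀ j : {j // j ≠ i}, X j,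
        F.weight G Finset.univ ((Equiv.piSplitAt i X).symm (t, y))
          ∂Measure.pi fun j : {j // j ≠ i} => μ j) ∧
    ∀ i, ∫⁻ x, F.weight G Finset.univ x ∂Measure.pi μ =
      ∫⁻ t, F.vertex i t * ∏ c ∈ G.neighborFinset i, m c i t ∂μ i := by
  let x₀ : ∀ i, X i := fun _ => Classical.arbitrary _
  have hmarginal : ∀ i t, (∫⋯∫⁻_{i}ᶜ, F.weight G Finset.univ ∂μ) (Function.update x₀ i t) =
      F.vertex i t * ∏ c ∈ G.neighborFinset i, m c i t := fun i t => by
    rw [hm.lmarginal_compl_singleton_weight hG, Function.update_self]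
  refine ⟨fun i t => ?_, fun i => ?_⟩
  · rw [← hmarginal, lmarginal_compl_singleton, Function.update_self]
  · rw [lintegral_pi_eq_lintegral_lmarginal_compl_singleton μ (F.measurable_weight G _) i x₀]
    exact lintegral_congr (hmarginal i)

theorem measurableSet_mpModel {V : Type*} [Countable V] (G : SimpleGraph V) {D : V → Set ℝ}
    (hD : ∀ i, MeasurableSet (D i)) {Dij : V → V → Set (ℝ × ℝ)}
    (hDij : ∀ i j, MeasurableSet (Dij i j)) : MeasurableSet (mpModel G D Dij) := by
  simp only [mpModel, Set.ofPred_and, Set.ofPred_forall]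
  exact .inter (.iInter fun i => measurable_pi_apply i (hD i)) <|
    .iInter fun i => .iInter fun j => .iInter fun _ =>
      (measurable_pi_apply i).prodMk (measurable_pi_apply j) (hDij i j)

section Constraints

variable {V : Type*} {D : V → Set ℝ} (hD : ∀ i, MeasurableSet (D i)) {Dij : V → V → Set (ℝ × ℝ)}
  (hDij : ∀ i j, MeasurableSet (Dij i j))
  (hsym : ∀ i j, ∀ p : ℝ × ℝ, p ∈ Dij i j ↔ p.swap ∈ Dij j i)

/-- The model whose factors are the indicators of the constraints `D_i` and `D_{ij}`. -/
def constraintFactors : PairwiseFactors fun _ : V => ℝ where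
  vertex i := (D i).indicator 1
  edge i j := (Dij i j).indicator 1
  measurable_vertex i := measurable_one.indicator (hD i)
  measurable_edge i j := measurable_one.indicator (hDij i j)
  edge_swap i j p := by
    classical
    simp only [Set.indicator_apply, hsym i j p]
    rfl

@[simp]
theorem constraintFactors_vertex (i : V) :
    (constraintFactors hD hDij hsym).vertex i = (D i).indicator 1 :=
  rfl

variable [Fintype V] (G : SimpleGraph V) [DecidableRel G.Adj]

theorem weight_constraintFactors_univ :
    (constraintFactors hD hDij hsym).weight G Finset.univ = (mpModel G D Dij).indicator 1 := by
  ext x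
  by_cases hx : x ∈ mpModel G D Dij
  · have hvertex : ∀ i ∈ Finset.univ, (constraintFactors hD hDij hsym).vertex i (x i) = 1 :=
      fun i _ => Set.indicator_of_mem (hx.1 i) 1
    have hedge : ∀ e ∈ G.edgeSet, (constraintFactors hD hDij hsym).sym2Edge x e = 1 := by
      intro e he
      induction e with
      | _ i j => exact Set.indicator_of_mem (hx.2 i j he) 1
    rw [PairwiseFactors.weight, Finset.prod_eq_one hvertex,
      Finset.prod_eq_one fun e he => hedge e (Finset.mem_filter.1 he).2,
      Set.indicator_of_mem hx, mul_one, Pi.one_apply]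
  · rw [Set.indicator_of_notMem hx, PairwiseFactors.weight, mul_eq_zero]
    obtain ⟨i, hi⟩ | ⟨i, j, hij, hxij⟩ :
        (∃ i, x i ∉ D i) ∨ ∃ i j, G.Adj i j ∧ (x i, x j) ∉ Dij i j := by
      simpa [mpModel, or_iff_not_imp_left] using hx
    · exact .inl (Finset.prod_eq_zero (Finset.mem_univ i) (Set.indicator_of_notMem hi 1))
    · exact .inr (Finset.prod_eq_zero (i := s(i, j)) (by simpa using hij)
        (Set.indicator_of_notMem hxij 1))

end Constraints

/-- Proposition 3, MI via message passing: on a tree `G`, with messages `m`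
satisfying the message-passing recursion, for every vertex `i` and every `t ∈ ℝ` the
indicator `1[t ∈ D_i]` times the belief `b_i(t) = ∏_{c ∈ N(i)} m_{c→i}(t)` equals the
partial Lebesgue integral of the indicator of `Δ` over all coordinates except `i`, with
the `i`-th coordinate fixed to `t`; consequently
`volume Δ = ∫ 1[t ∈ D_i] · b_i(t) dt` for every vertex `i`. -/
theorem mi_message_passing {V : Type*} [Fintype V] [DecidableEq V]
    (G : SimpleGraph V) [DecidableRel G.Adj] (hG : G.IsTree)
    (D : V → Set ℝ) (hD : ∀ i, MeasurableSet (D i))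
    (Dij : V → V → Set (ℝ × ℝ)) (hDij : ∀ i j, MeasurableSet (Dij i j))
    (hsym : ∀ i j, ∀ p : ℝ × ℝ, p ∈ Dij i j ↔ p.swap ∈ Dij j i)
    (m : V → V → ℝ → ℝ≥0∞)
    (hm : ∀ i j, G.Adj i j → ∀ t : ℝ,
      m i j t = ∫⁻ x : ℝ,
        (Dij i j).indicator (1 : ℝ × ℝ → ℝ≥0∞) (x, t) *
          (D i).indicator (1 : ℝ → ℝ≥0∞) x *
          ∏ c ∈ (G.neighborFinset i).erase j, m c i x) :
    (∀ i : V, ∀ t : ℝ,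
      (D i).indicator (1 : ℝ → ℝ≥0∞) t * ∏ c ∈ G.neighborFinset i, m c i t
        = ∫⁻ y : {j : V // j ≠ i} → ℝ,
            (mpModel G D Dij).indicator (1 : (V → ℝ) → ℝ≥0∞)
              (fun j => if h : j = i then t else y ⟨j, h⟩)) ∧
    (∀ i : V, volume (mpModel G D Dij)
        = ∫⁻ t : ℝ,
            (D i).indicator (1 : ℝ → ℝ≥0∞) t * ∏ c ∈ G.neighborFinset i, m c i t) := by
  simpa only [constraintFactors_vertex, weight_constraintFactors_univ, Equiv.piSplitAt,
    Equiv.coe_fn_symm_mk, eq_rec_constant, ← volume_pi,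
    lintegral_indicator_one (measurableSet_mpModel G hD hDij)] using
    mi_message_passing_general (F := constraintFactors hD hDij hsym) hG hm
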